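/- For partitions λ, μ contained in the m×n rectangle, each with p boxes: dim S^λ(ℂ^m) · dim S^{λ'}(ℂ^n) · f^μ · f^{n^m/μ} = dim S^μ(ℂ^m) · dim S^{μ'}(ℂ^n) · f^λ · f^{n^m/λ}. -/

import Mathlib

open YoungDiagram Finset

/-- The rectangular Young diagram with `m` rows and `n` columns. -/
def rect (m n : ℕ) : YoungDiagram where
  cells := Finset.range m ×ˢ Finset.range n
  isLowerSet := by
    rintro ⟨a1, a2⟩ ⟨b1, b2⟩ ⟨h1, h2⟩ hb
    simp only [Finset.coe_product, Set.mem_prod, Finset.mem_coe, Finset.mem_range] at *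
    exact ⟨lt_of_le_of_lt h1 hb.1, lt_of_le_of_lt h2 hb.2⟩

/-- The 180°-rotated complement of a Young diagram `μ` inside the rectangle with
`m` rows and `n` columns: its row lengths are `n - μ.rowLen (m-1-i)`. -/
def complement (m n : ℕ) (μ : YoungDiagram) : YoungDiagram where
  cells := (Finset.range m ×ˢ Finset.range n).filter fun p => p.2 < n - μ.rowLen (m - 1 - p.1)
  isLowerSet := by
    rintro ⟨a1, a2⟩ ⟨b1, b2⟩ ⟨h1, h2⟩ hb
    simp only [Finset.coe_filter, Set.mem_setOf_eq, Finset.mem_product, Finset.mem_range] at *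
    refine ⟨⟨lt_of_le_of_lt h1 hb.1.1, lt_of_le_of_lt h2 hb.1.2⟩, ?_⟩
    calc b2 ≤ a2 := h2
      _ < n - μ.rowLen (m - 1 - a1) := hb.2
      _ ≤ n - μ.rowLen (m - 1 - b1) :=
          Nat.sub_le_sub_left (μ.rowLen_anti _ _ (Nat.sub_le_sub_left h1 _)) n

/-- The hook length of the cell `c` in the Young diagram `μ` (arm + leg + 1). -/
def hookLength (μ : YoungDiagram) (c : ℕ × ℕ) : ℕ :=
  (μ.rowLen c.1 - c.2) + (μ.colLen c.2 - c.1) - 1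

/-- The product of all hook lengths of `μ`. -/
def hookProd (μ : YoungDiagram) : ℕ := ∏ c ∈ μ.cells, hookLength μ c

/-- The number of semistandard Young tableaux of shape `μ` with entries in `{0, …, k-1}`;
this equals `s_μ(1^k) = dim S^μ(ℂ^k)`. -/
noncomputable def ssytCount (μ : YoungDiagram) (k : ℕ) : ℕ :=
  Set.ncard {T : SemistandardYoungTableau μ | ∀ i j, (i, j) ∈ μ → T i j < k}

/-- `T : ℕ × ℕ → ℕ` is a standard Young tableau of shape `μ` (with entries `0, …, |μ|-1`):
it is a bijection from the cells of `μ` to `{0, …, |μ|-1}`, strictly increasing along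
rows and columns, and zero outside `μ`. -/
def IsSyt (μ : YoungDiagram) (T : ℕ × ℕ → ℕ) : Prop :=
  Set.BijOn T (μ.cells : Set (ℕ × ℕ)) (Finset.range μ.card : Set ℕ) ∧
  (∀ i j, (i, j + 1) ∈ μ → T (i, j) < T (i, j + 1)) ∧
  (∀ i j, (i + 1, j) ∈ μ → T (i, j) < T (i + 1, j)) ∧
  (∀ c, c ∉ μ → T c = 0)

/-- The number of standard Young tableaux of shape `μ`, i.e. `f^μ`. -/
noncomputable def sytCount (μ : YoungDiagram) : ℕ := Set.ncard {T | IsSyt μ T}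

/-!
Read the rows of `μ ≤ rect m n` from the bottom and let `A ⊆ {0, …, m + n - 1}` be the set of the
beta-numbers `μ_{m-i} + i`. Branching rules express both tableau counts of `μ` through the
Vandermonde product `Δ(A)`: deleting the largest entries of a semistandard tableau gives
`dim S^μ(ℂ^m) ∏_{j<m} j! = Δ(A)`, and deleting the largest entry of a standard one gives
`f^μ ∏_{a∈A} a! = |μ|! Δ(A)`. The rotated complement of `μ` has beta-set the reflection of `A`, the
transpose the reflection of `{0, …, m + n - 1} \ A`. Splitting the Vandermonde product of
`{0, …, m + n - 1}` along `A` then shows that `f^μ f^{n^m/μ}` and `dim S^μ(ℂ^m) dim S^{μ'}(ℂ^n)`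
have a ratio depending only on `m`, `n` and `|μ|`.
-/

section Determinants

open scoped Nat

variable {R : Type*} [CommRing R]

theorem sum_det_updateRow_mul {ι : Type*} [Fintype ι] [DecidableEq ι] (M : Matrix ι ι R)
    (d : ι → R) : ∑ i, (M.updateRow i fun j => d j * M i j).det = (∑ j, d j) * M.det := by
  calc ∑ i, (M.updateRow i fun j => d j * M i j).det
      = ∑ i, ∑ j, M.adjugate j i * (d j * M i j) := by
        refine sum_congr rfl fun i _ => ?_
        rw [← Matrix.cramer_transpose_apply, Matrix.cramer_eq_adjugate_mulVec,
          ← Matrix.adjugate_transpose]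
        rfl
    _ = ∑ j, d j * (M.adjugate * M) j j := by
        rw [sum_comm]
        simp_rw [Matrix.mul_apply, mul_sum, mul_left_comm]
    _ = (∑ j, d j) * M.det := by simp [Matrix.adjugate_mul, sum_mul]

theorem mul_eval_descPochhammer_sub_one (x : R) (j : ℕ) :
    x * (descPochhammer R j).eval (x - 1) = (x - j) * (descPochhammer R j).eval x := by
  have h := congrArg (Polynomial.eval x)
    ((descPochhammer_succ_left R j).symm.trans (descPochhammer_succ_right R j))
  simpa [mul_comm] using h

theorem det_eval_descPochhammer [IsDomain R] {m : ℕ} (x : Fin m → R) :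
    (Matrix.of fun i j : Fin m => (descPochhammer R j).eval (x i)).det =
      (Matrix.vandermonde x).det :=
  (Matrix.det_eval_matrixOfPolynomials_eq_det_vandermonde x _
    (fun j => descPochhammer_natDegree R j) fun j => monic_descPochhammer R j).symm

theorem sum_mul_det_vandermonde_update_sub_one [IsDomain R] {m : ℕ} (x : Fin m → R) :
    ∑ i, x i * (Matrix.vandermonde (Function.update x i (x i - 1))).det =
      (∑ i, (x i - (i : ℕ))) * (Matrix.vandermonde x).det := by
  -- In the basis of falling factorials `x * (x - 1)_j = x * (x)_j - j * (x)_j`, so the shifted row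
  -- is a combination of row `i` and its rescaling by the column indices.
  set M : Matrix (Fin m) (Fin m) R := .of fun i j => (descPochhammer R j).eval (x i) with hM
  have hterm (i : Fin m) : x i * (Matrix.vandermonde (Function.update x i (x i - 1))).det =
      x i * M.det - (M.updateRow i fun j => (j : ℕ) * M i j).det := by
    have hupdate : (Matrix.of fun k j : Fin m =>
        (descPochhammer R j).eval (Function.update x i (x i - 1) k)) =
        M.updateRow i fun j => (descPochhammer R j).eval (x i - 1) := by
      ext k j
      obtain rfl | hk := eq_or_ne k i <;> simp [M, *]
    have hrow : x i • (fun j : Fin m => (descPochhammer R j).eval (x i - 1)) =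
        x i • M i + (-1 : R) • fun j : Fin m => (j : ℕ) * M i j := by
      ext j
      simp only [Pi.add_apply, Pi.smul_apply, smul_eq_mul, hM, Matrix.of_apply,
        mul_eval_descPochhammer_sub_one]
      ring
    rw [← det_eval_descPochhammer, hupdate, ← Matrix.det_updateRow_smul, hrow,
      Matrix.det_updateRow_add, Matrix.det_updateRow_smul, Matrix.det_updateRow_smul,
      Matrix.updateRow_eq_self]
    ring
  simp_rw [hterm, sum_sub_distrib, sum_det_updateRow_mul, ← sum_mul, ← sub_mul]
  rw [← det_eval_descPochhammer]

theorem prod_factorial_mul_det_choose [IsDomain R] {m : ℕ} (l : Fin m → ℕ) :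
    (∏ j : Fin m, (j ! : R)) * (Matrix.of fun i j : Fin m => ((l i).choose j : R)).det =
      (Matrix.vandermonde fun i => (l i : R)).det := by
  rw [← Matrix.det_mul_row, ← det_eval_descPochhammer]
  simp [descPochhammer_eval_eq_descFactorial, Nat.descFactorial_eq_factorial_mul_choose]

theorem sum_Ico_choose_add_choose_succ {a b : ℕ} (h : a ≤ b) (j : ℕ) :
    ∑ x ∈ Ico a b, x.choose j + a.choose (j + 1) = b.choose (j + 1) := by
  induction b, h using Nat.le_induction with
  | base => simp
  | succ b hb ih => rw [sum_Ico_succ_top hb, Nat.choose_succ_succ', ← ih]; ring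

theorem det_choose_succ {k : ℕ} {l : Fin (k + 1) → ℕ} (hl : Monotone l) :
    (Matrix.of fun i j : Fin (k + 1) => ((l i).choose j : R)).det =
      ∑ x ∈ Fintype.piFinset fun i : Fin k => Ico (l i.castSucc) (l i.succ),
        (Matrix.of fun i j : Fin k => ((x i).choose j : R)).det := by
  -- Subtracting consecutive rows clears the first column; the remaining entries are
  -- hockey-stick sums, over which the determinant expands multilinearly.
  have hentry (i : Fin k) (j : ℕ) : (∑ x ∈ Ico (l i.castSucc) (l i.succ), (x.choose j : R)) =
      (l i.succ).choose (j + 1) - (l i.castSucc).choose (j + 1) := by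
    rw [eq_sub_iff_add_eq]
    exact_mod_cast congrArg (Nat.cast (R := R))
      (sum_Ico_choose_add_choose_succ (hl i.castSucc_le_succ) j)
  have hsum := (Matrix.detRowAlternating (R := R) (n := Fin k)).toMultilinearMap.map_sum_finset
    (fun _ (x : ℕ) (j : Fin k) => (x.choose j : R)) fun i => Ico (l i.castSucc) (l i.succ)
  calc (Matrix.of fun i j : Fin (k + 1) => ((l i).choose j : R)).det
      = (Matrix.of fun i j : Fin (k + 1) => (Fin.cases ((l 0).choose j : R)
          (fun i => ((l i.succ).choose j : R) - (l i.castSucc).choose j) i : R)).det :=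
        Matrix.det_eq_of_forall_row_eq_smul_add_pred (fun _ => 1) (by simp) (by simp)
    _ = (Matrix.of fun i j : Fin k =>
          ∑ x ∈ Ico (l i.castSucc) (l i.succ), (x.choose j : R)).det := by
        rw [Matrix.det_succ_column_zero, Fin.sum_univ_succ]
        simp only [Matrix.of_apply, Fin.cases_zero, Fin.cases_succ, Fin.val_zero, Fin.val_succ,
          Nat.choose_zero_right, Nat.cast_one, sub_self, mul_zero, zero_mul, sum_const_zero,
          add_zero, pow_zero, one_mul, Fin.succAbove_zero, hentry]
        rfl
    _ = _ := by
        refine Eq.trans (congrArg Matrix.det ?_) hsum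
        ext i j
        simp

end Determinants

section PositiveDifferences

open scoped Nat

/-- The product of the positive differences `b - a` with `a ∈ A` and `b ∈ B`. In particular
`gapProd A A` is the absolute value of the Vandermonde determinant of `A`; allowing two different
sets makes the product multiplicative in each of them. -/
def gapProd (A B : Finset ℕ) : ℕ := ∏ a ∈ A, ∏ b ∈ B with a < b, (b - a)

theorem gapProd_pos (A B : Finset ℕ) : 0 < gapProd A B :=
  prod_pos fun _ _ => prod_pos fun _ hb => Nat.sub_pos_of_lt (mem_filter.1 hb).2

theorem gapProd_sdiff_mul_left {A S : Finset ℕ} (h : A ⊆ S) (B : Finset ℕ) :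
    gapProd (S \ A) B * gapProd A B = gapProd S B :=
  prod_sdiff h

theorem gapProd_sdiff_mul_right (A : Finset ℕ) {B S : Finset ℕ} (h : B ⊆ S) :
    gapProd A (S \ B) * gapProd A B = gapProd A S := by
  simp_rw [gapProd, prod_filter, ← prod_mul_distrib, prod_sdiff h]

theorem injOn_reflect {N : ℕ} {A : Finset ℕ} (hA : A ⊆ range N) :
    Set.InjOn (N - 1 - ·) (A : Set ℕ) := by
  intro a ha b hb (hab : N - 1 - a = N - 1 - b)
  have := mem_range.1 (hA ha)
  have := mem_range.1 (hA hb)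
  omega

theorem gapProd_image_reflect {N : ℕ} {A B : Finset ℕ} (hA : A ⊆ range N) (hB : B ⊆ range N) :
    gapProd (A.image (N - 1 - ·)) (B.image (N - 1 - ·)) = gapProd B A := by
  simp_rw [gapProd, prod_filter]
  rw [prod_image (injOn_reflect hA), prod_comm (s := B)]
  refine prod_congr rfl fun a ha => ?_
  rw [prod_image (injOn_reflect hB)]
  refine prod_congr rfl fun b hb => ?_
  have := mem_range.1 (hA ha)
  have := mem_range.1 (hB hb)
  split_ifs <;> omega

theorem gapProd_range_left {N : ℕ} {A : Finset ℕ} (hA : A ⊆ range N) :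
    gapProd (range N) A = ∏ a ∈ A, a ! := by
  simp_rw [gapProd, prod_filter]
  rw [prod_comm]
  refine prod_congr rfl fun a ha => ?_
  have hfilter : {b ∈ range N | b < a} = range a := by
    ext b
    have := mem_range.1 (hA ha)
    simp only [mem_filter, mem_range]
    omega
  rw [← prod_filter, hfilter, ← Nat.descFactorial_eq_prod_range, Nat.descFactorial_self]

theorem gapProd_range_right (A : Finset ℕ) (N : ℕ) :
    gapProd A (range N) = ∏ a ∈ A, (N - 1 - a)! := by
  refine prod_congr rfl fun a _ => ?_
  have hfilter : {b ∈ range N | a < b} = Ico (a + 1) N := by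
    ext b
    simp only [mem_filter, mem_range, mem_Ico]
    omega
  rw [hfilter, prod_Ico_eq_prod_range, ← prod_range_add_one_eq_factorial,
    show N - (a + 1) = N - 1 - a by omega]
  exact prod_congr rfl fun b _ => by omega

theorem gapProd_sdiff_mul_factorials {N : ℕ} {A : Finset ℕ} (hA : A ⊆ range N) :
    gapProd (range N \ A) (range N \ A) * ((∏ a ∈ A, a !) * ∏ a ∈ A, (N - 1 - a)!) =
      gapProd A A * gapProd (range N) (range N) := by
  rw [← gapProd_range_left hA, ← gapProd_range_right A,
    ← gapProd_sdiff_mul_left hA (range N), ← gapProd_sdiff_mul_left hA A,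
    ← gapProd_sdiff_mul_right A hA, ← gapProd_sdiff_mul_right (range N \ A) hA]
  ring

theorem det_vandermonde_eq_gapProd {R : Type*} [CommRing R] {m : ℕ} {l : Fin m → ℕ}
    (hl : StrictMono l) : (Matrix.vandermonde fun i => (l i : R)).det =
      (gapProd (univ.image l) (univ.image l) : R) := by
  rw [Matrix.det_vandermonde, gapProd, prod_image hl.injective.injOn, Nat.cast_prod]
  refine prod_congr rfl fun i _ => ?_
  have hfilter : {b ∈ univ.image l | l i < b} = (Ioi i).image l := by
    ext b
    simp only [mem_filter, mem_image, mem_univ, true_and, mem_Ioi]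
    grind [hl.lt_iff_lt]
  rw [hfilter, prod_image hl.injective.injOn, Nat.cast_prod]
  exact prod_congr rfl fun j hj => by rw [Nat.cast_sub (hl (mem_Ioi.1 hj)).le]

end PositiveDifferences

section RowLengths

theorem le_iff_rowLen_le {μ ν : YoungDiagram} : μ ≤ ν ↔ ∀ i, μ.rowLen i ≤ ν.rowLen i := by
  refine ⟨fun h i => ?_, fun h => ?_⟩
  · by_contra! hlt
    exact lt_irrefl _ (mem_iff_lt_rowLen.1 (h (mem_iff_lt_rowLen.2 hlt)))
  · rintro ⟨i, j⟩ hij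
    exact mem_iff_lt_rowLen.2 ((mem_iff_lt_rowLen.1 hij).trans_le (h i))

theorem eq_of_rowLen_eq {μ ν : YoungDiagram} (h : ∀ i, μ.rowLen i = ν.rowLen i) : μ = ν :=
  le_antisymm (le_iff_rowLen_le.2 fun i => (h i).le) (le_iff_rowLen_le.2 fun i => (h i).ge)

theorem rowLen_eq_zero_of_le {μ : YoungDiagram} {m r : ℕ} (hμ : μ.rowLen m = 0) (hr : m ≤ r) :
    μ.rowLen r = 0 :=
  Nat.eq_zero_of_le_zero (hμ ▸ μ.rowLen_anti m r hr)

theorem rowLen_bot (i : ℕ) : (⊥ : YoungDiagram).rowLen i = 0 := by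
  simp [rowLen_eq_card, row]

theorem eq_bot_of_rowLen_zero {μ : YoungDiagram} (hμ : μ.rowLen 0 = 0) : μ = ⊥ :=
  le_bot_iff.1 <| le_iff_rowLen_le.2 fun i => by simp [rowLen_eq_zero_of_le hμ i.zero_le]

theorem card_eq_sum_rowLen {μ : YoungDiagram} {m : ℕ} (hμ : μ.rowLen m = 0) :
    μ.card = ∑ i ∈ range m, μ.rowLen i := by
  simp_rw [rowLen_eq_card, row]
  refine card_eq_sum_card_fiberwise fun ⟨i, j⟩ hij => ?_
  rw [mem_coe, mem_cells, mem_iff_lt_rowLen] at hij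
  by_contra hi
  have := rowLen_eq_zero_of_le hμ (by simpa using hi : m ≤ i)
  omega

theorem exists_rowLen_eq {μ : YoungDiagram} {a : ℕ → ℕ} (ha : Antitone a)
    (haμ : ∀ i, a i ≤ μ.rowLen i) : ∃ ν : YoungDiagram, ∀ i, ν.rowLen i = a i := by
  refine ⟨⟨μ.cells.filter fun c => c.2 < a c.1, ?_⟩, fun i => eq_of_forall_lt_iff fun j => ?_⟩
  · rintro ⟨i', j'⟩ ⟨i, j⟩ ⟨hi, hj⟩ h
    simp only [coe_filter, mem_cells, Set.mem_ofPred_eq] at h ⊢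
    exact ⟨μ.up_left_mem hi hj h.1, (hj.trans_lt h.2).trans_le (ha hi)⟩
  · rw [← mem_iff_lt_rowLen, ← mem_cells, mem_filter, mem_cells, mem_iff_lt_rowLen]
    exact and_iff_right_of_imp fun h => h.trans_le (haμ i)

theorem finite_setOf_le (μ : YoungDiagram) : {ν | ν ≤ μ}.Finite :=
  Set.Finite.of_injOn (f := cells) (t := (μ.cells.powerset : Set _))
    (fun _ hν => mem_powerset.2 (cells_subset_iff.2 hν)) (fun _ _ _ _ h => YoungDiagram.ext h)
    (finite_toSet _)

end RowLengths

section BetaNumbers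

/-- The beta-numbers (first-column hook lengths) `μ_{m-i} + i` of a diagram in a frame of `m` rows.
The rows are read from the bottom so that the sequence increases. -/
def betaNumber (μ : YoungDiagram) (m : ℕ) (i : Fin m) : ℕ := μ.rowLen i.rev + i

/-- The set of beta-numbers of a diagram in a frame of `m` rows. -/
def betaSet (μ : YoungDiagram) (m : ℕ) : Finset ℕ := univ.image (betaNumber μ m)

theorem betaNumber_strictMono (μ : YoungDiagram) (m : ℕ) : StrictMono (betaNumber μ m) :=
  fun _ _ hij => Nat.add_lt_add_of_le_of_lt
    (μ.rowLen_anti _ _ (Fin.rev_le_rev.2 hij.le)) (Fin.lt_def.1 hij)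

theorem det_vandermonde_betaNumber {R : Type*} [CommRing R] (μ : YoungDiagram) (m : ℕ) :
    (Matrix.vandermonde fun i => (betaNumber μ m i : R)).det =
      gapProd (betaSet μ m) (betaSet μ m) :=
  det_vandermonde_eq_gapProd (betaNumber_strictMono μ m)

theorem card_betaSet (μ : YoungDiagram) (m : ℕ) : (betaSet μ m).card = m := by
  simp [betaSet, card_image_of_injective _ (betaNumber_strictMono μ m).injective]

theorem prod_betaSet {M : Type*} [CommMonoid M] (μ : YoungDiagram) (m : ℕ) (f : ℕ → M) :
    ∏ a ∈ betaSet μ m, f a = ∏ i, f (betaNumber μ m i) :=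
  prod_image (betaNumber_strictMono μ m).injective.injOn

theorem sum_betaNumber_sub {μ : YoungDiagram} {m : ℕ} (hμ : μ.rowLen m = 0) :
    ∑ i, ((betaNumber μ m i : ℤ) - (i : ℕ)) = μ.card := by
  rw [card_eq_sum_rowLen hμ, sum_range, ← Equiv.sum_comp Fin.revPerm]
  simp [betaNumber]

theorem betaNumber_bot (m : ℕ) : betaNumber ⊥ m = fun i : Fin m => (i : ℕ) := by
  funext i
  simp [betaNumber, rowLen_bot]

theorem betaSet_bot (m : ℕ) : betaSet ⊥ m = range m := by
  ext a
  simp [betaSet, betaNumber_bot, Fin.exists_iff]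

/-- `ν` interlaces `μ` when `μ / ν` is a horizontal strip, i.e. has at most one box in every
column. -/
def Interlaces (ν μ : YoungDiagram) : Prop :=
  ∀ i, μ.rowLen (i + 1) ≤ ν.rowLen i ∧ ν.rowLen i ≤ μ.rowLen i

theorem Interlaces.le {μ ν : YoungDiagram} (h : Interlaces ν μ) : ν ≤ μ :=
  le_iff_rowLen_le.2 fun i => (h i).2

theorem finite_setOf_interlaces (μ : YoungDiagram) (k : ℕ) :
    {ν | ν.rowLen k = 0 ∧ Interlaces ν μ}.Finite :=
  (finite_setOf_le μ).subset fun _ hν => hν.2.le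

theorem interlaces_iff {μ ν : YoungDiagram} :
    Interlaces ν μ ↔ ν ≤ μ ∧ ∀ i j, (i + 1, j) ∈ μ → (i, j) ∈ ν := by
  refine ⟨fun h => ⟨h.le, fun i j hij => ?_⟩, fun h i => ⟨?_, le_iff_rowLen_le.1 h.1 i⟩⟩
  · exact mem_iff_lt_rowLen.2 ((mem_iff_lt_rowLen.1 hij).trans_le (h i).1)
  · exact le_of_forall_lt fun j hj =>
      mem_iff_lt_rowLen.1 (h.2 i j (mem_iff_lt_rowLen.2 hj))

theorem betaNumber_injOn (k : ℕ) : Set.InjOn (betaNumber · k) {μ | μ.rowLen k = 0} := by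
  intro μ hμ ν hν h
  refine eq_of_rowLen_eq fun r => ?_
  obtain hr | hr := lt_or_ge r k
  · have := congrFun h (Fin.rev ⟨r, hr⟩)
    simpa [betaNumber] using this
  · rw [rowLen_eq_zero_of_le hμ hr, rowLen_eq_zero_of_le hν hr]

theorem betaNumber_mem_Ico_iff {μ ν : YoungDiagram} {k : ℕ} {i : Fin k} :
    betaNumber ν k i ∈ Ico (betaNumber μ (k + 1) i.castSucc) (betaNumber μ (k + 1) i.succ) ↔
      μ.rowLen (i.rev + 1) ≤ ν.rowLen i.rev ∧ ν.rowLen i.rev ≤ μ.rowLen i.rev := by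
  simp only [betaNumber, mem_Ico, Fin.rev_castSucc, Fin.rev_succ, Fin.val_succ, Fin.val_castSucc]
  omega

theorem exists_betaNumber_eq_of_mem_Ico {μ : YoungDiagram} {k : ℕ} {x : Fin k → ℕ}
    (hμ : μ.rowLen (k + 1) = 0)
    (hx : ∀ i, x i ∈ Ico (betaNumber μ (k + 1) i.castSucc) (betaNumber μ (k + 1) i.succ)) :
    ∃ ν : YoungDiagram, ν.rowLen k = 0 ∧ betaNumber ν k = x := by
  let a (r : ℕ) : ℕ := if hr : r < k then x (Fin.rev ⟨r, hr⟩) - (Fin.rev ⟨r, hr⟩ : Fin k) else 0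
  have ha (r : ℕ) : μ.rowLen (r + 1) ≤ a r ∧ a r ≤ μ.rowLen r := by
    simp only [a]
    split_ifs with hr
    · have := hx (Fin.rev ⟨r, hr⟩)
      simp only [betaNumber, mem_Ico, Fin.rev_castSucc, Fin.rev_succ, Fin.rev_rev, Fin.val_succ,
        Fin.val_castSucc] at this
      omega
    · simp [rowLen_eq_zero_of_le hμ (show k + 1 ≤ r + 1 by omega)]
  obtain ⟨ν, hν⟩ := exists_rowLen_eq
    (antitone_nat_of_succ_le fun r => (ha (r + 1)).2.trans (ha r).1) fun r => (ha r).2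
  refine ⟨ν, by simp [hν, a], funext fun i => ?_⟩
  have := (mem_Ico.1 (hx i)).1
  simp only [betaNumber, Fin.val_castSucc] at this
  simp only [betaNumber, hν, a, Fin.is_lt, dif_pos, Fin.eta, Fin.rev_rev]
  omega

theorem betaNumber_bijOn_interlaces {μ : YoungDiagram} {k : ℕ} (hμ : μ.rowLen (k + 1) = 0) :
    Set.BijOn (betaNumber · k) {ν | ν.rowLen k = 0 ∧ Interlaces ν μ}
      (Fintype.piFinset fun i : Fin k =>
        Ico (betaNumber μ (k + 1) i.castSucc) (betaNumber μ (k + 1) i.succ)) := by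
  refine ⟨fun ν hν => ?_, (betaNumber_injOn k).mono fun ν hν => hν.1, fun x hx => ?_⟩
  · simpa using fun i => mem_Ico.1 (betaNumber_mem_Ico_iff.2 (hν.2 i.rev))
  · rw [mem_coe, Fintype.mem_piFinset] at hx
    obtain ⟨ν, hν, rfl⟩ := exists_betaNumber_eq_of_mem_Ico hμ hx
    refine ⟨ν, ⟨hν, fun r => ?_⟩, rfl⟩
    obtain hr | hr := lt_or_ge r k
    · simpa using betaNumber_mem_Ico_iff.1 (hx (Fin.rev ⟨r, hr⟩))
    · simp [rowLen_eq_zero_of_le hν hr, rowLen_eq_zero_of_le hμ (Nat.succ_le_succ hr)]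

end BetaNumbers

section SemistandardTableaux

open scoped Nat

/-- The semistandard tableaux of shape `μ` counted by `ssytCount μ k`. -/
def boundedSsyt (μ : YoungDiagram) (k : ℕ) : Set (SemistandardYoungTableau μ) :=
  {T | ∀ i j, (i, j) ∈ μ → T i j < k}

theorem finite_boundedSsyt (μ : YoungDiagram) (k : ℕ) : (boundedSsyt μ k).Finite := by
  refine Set.Finite.of_injOn (f := fun T (c : μ.cells) => T c.1.1 c.1.2)
    (t := Set.pi Set.univ fun _ => Set.Iio k) (fun T hT c _ => hT _ _ ((mem_cells _).1 c.2))
    (fun T _ T' _ h => ?_) (Set.Finite.pi fun _ => Set.finite_Iio k)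
  ext i j
  by_cases hij : (i, j) ∈ μ
  · exact congrFun h ⟨(i, j), (mem_cells _).2 hij⟩
  · rw [T.zeros hij, T'.zeros hij]

theorem row_le_ssyt_entry {μ : YoungDiagram} (T : SemistandardYoungTableau μ) {i j : ℕ}
    (hij : (i, j) ∈ μ) : i ≤ T i j := by
  induction i with
  | zero => exact Nat.zero_le _
  | succ i ih =>
    exact (ih (μ.up_left_mem i.le_succ le_rfl hij)).trans_lt (T.col_strict i.lt_succ_self hij)

/-- The diagram formed by the cells of `T` with entry less than `k`. -/
def lowerShape {μ : YoungDiagram} (T : SemistandardYoungTableau μ) (k : ℕ) : YoungDiagram where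
  cells := μ.cells.filter fun c => T c.1 c.2 < k
  isLowerSet := by
    rintro ⟨i, j⟩ ⟨i', j'⟩ ⟨hi, hj⟩ h
    simp only [coe_filter, mem_cells, Set.mem_ofPred_eq] at h ⊢
    have hij : (i', j) ∈ μ := μ.up_left_mem hi le_rfl h.1
    exact ⟨μ.up_left_mem hi hj h.1,
      ((T.row_weak_of_le hj hij).trans (T.col_weak hi h.1)).trans_lt h.2⟩

theorem mem_lowerShape {μ : YoungDiagram} {T : SemistandardYoungTableau μ} {k i j : ℕ} :
    (i, j) ∈ lowerShape T k ↔ (i, j) ∈ μ ∧ T i j < k := by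
  rw [← mem_cells, lowerShape, mem_filter, mem_cells]

theorem rowLen_lowerShape {μ : YoungDiagram} (T : SemistandardYoungTableau μ) (k : ℕ) :
    (lowerShape T k).rowLen k = 0 := by
  by_contra h
  obtain ⟨hμ, hT⟩ := mem_lowerShape.1 (mem_iff_lt_rowLen.2 (Nat.pos_of_ne_zero h))
  exact hT.not_ge (row_le_ssyt_entry T hμ)

theorem interlaces_lowerShape {μ : YoungDiagram} {k : ℕ} {T : SemistandardYoungTableau μ}
    (hT : T ∈ boundedSsyt μ (k + 1)) : Interlaces (lowerShape T k) μ := by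
  refine interlaces_iff.2 ⟨fun _ h => (mem_lowerShape.1 h).1, fun i j h => mem_lowerShape.2
    ⟨μ.up_left_mem i.le_succ le_rfl h, ?_⟩⟩
  exact (T.col_strict i.lt_succ_self h).trans_le (Nat.le_of_lt_succ (hT _ _ h))

/-- The restriction of a semistandard tableau to a smaller shape. -/
def restrictSsyt {ν μ : YoungDiagram} (h : ν ≤ μ) (T : SemistandardYoungTableau μ) :
    SemistandardYoungTableau ν where
  entry i j := if (i, j) ∈ ν then T i j else 0
  row_weak' hj hν := by
    simpa only [if_pos hν, if_pos (ν.up_left_mem le_rfl hj.le hν)] using T.row_weak hj (h hν)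
  col_strict' hi hν := by
    simpa only [if_pos hν, if_pos (ν.up_left_mem hi.le le_rfl hν)] using T.col_strict hi (h hν)
  zeros' hν := if_neg hν

theorem restrictSsyt_apply {ν μ : YoungDiagram} (h : ν ≤ μ) (T : SemistandardYoungTableau μ)
    (i j : ℕ) : restrictSsyt h T i j = if (i, j) ∈ ν then T i j else 0 :=
  rfl

/-- The extension of a semistandard tableau with entries less than `k` by a horizontal strip
filled with the entry `k`. -/
def extendSsyt {ν μ : YoungDiagram} {k : ℕ} (h : Interlaces ν μ) (S : SemistandardYoungTableau ν)
    (hS : S ∈ boundedSsyt ν k) : SemistandardYoungTableau μ where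
  entry i j := if (i, j) ∈ ν then S i j else if (i, j) ∈ μ then k else 0
  row_weak' {i j₁ j₂} hj hμ := by
    have hμ₁ : (i, j₁) ∈ μ := μ.up_left_mem le_rfl hj.le hμ
    by_cases hν : (i, j₂) ∈ ν
    · simpa only [if_pos hν, if_pos (ν.up_left_mem le_rfl hj.le hν)] using S.row_weak hj hν
    · simp only [if_neg hν, if_pos hμ, if_pos hμ₁]
      split_ifs with hν₁
      exacts [(hS _ _ hν₁).le, le_rfl]
  col_strict' {i₁ i₂ j} hi hμ := by
    have hν₁ : (i₁, j) ∈ ν := (interlaces_iff.1 h).2 _ _ (μ.up_left_mem hi le_rfl hμ)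
    by_cases hν : (i₂, j) ∈ ν
    · simpa only [if_pos hν, if_pos hν₁] using S.col_strict hi hν
    · simpa only [if_neg hν, if_pos hμ, if_pos hν₁] using hS _ _ hν₁
  zeros' hμ := by rw [if_neg fun hν => hμ (h.le hν), if_neg hμ]

theorem extendSsyt_apply {ν μ : YoungDiagram} {k : ℕ} (h : Interlaces ν μ)
    (S : SemistandardYoungTableau ν) (hS : S ∈ boundedSsyt ν k) (i j : ℕ) :
    extendSsyt h S hS i j = if (i, j) ∈ ν then S i j else if (i, j) ∈ μ then k else 0 :=
  rfl

theorem lowerShape_extendSsyt {ν μ : YoungDiagram} {k : ℕ} (h : Interlaces ν μ)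
    (S : SemistandardYoungTableau ν) (hS : S ∈ boundedSsyt ν k) :
    lowerShape (extendSsyt h S hS) k = ν := by
  refine SetLike.ext fun ⟨i, j⟩ => ?_
  rw [mem_lowerShape, extendSsyt_apply]
  by_cases hν : (i, j) ∈ ν
  · simp [hν, h.le hν, hS i j hν]
  · simp +contextual [hν]

theorem restrictSsyt_bijOn {ν μ : YoungDiagram} {k : ℕ} (h : Interlaces ν μ) :
    Set.BijOn (restrictSsyt h.le) {T ∈ boundedSsyt μ (k + 1) | lowerShape T k = ν}
      (boundedSsyt ν k) := by
  refine ⟨?_, ?_, fun S hS => ⟨extendSsyt h S hS, ⟨fun i j hμ => ?_,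
    lowerShape_extendSsyt h S hS⟩, ?_⟩⟩
  · rintro T ⟨-, rfl⟩ i j hij
    simpa only [restrictSsyt_apply, if_pos hij] using (mem_lowerShape.1 hij).2
  · rintro T ⟨hT, rfl⟩ T' ⟨hT', hTT'⟩ hres
    ext i j
    by_cases hμ : (i, j) ∈ μ
    · by_cases hν : (i, j) ∈ lowerShape T k
      · simpa only [restrictSsyt_apply, if_pos hν] using congrArg (fun S => S i j) hres
      · have hν' := hTT' ▸ hν
        rw [mem_lowerShape, not_and, not_lt] at hν hν'
        rw [(Nat.le_of_lt_succ (hT i j hμ)).antisymm (hν hμ),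
          (Nat.le_of_lt_succ (hT' i j hμ)).antisymm (hν' hμ)]
    · rw [T.zeros hμ, T'.zeros hμ]
  · rw [extendSsyt_apply]
    split_ifs with hν
    exacts [(hS i j hν).trans k.lt_succ_self, k.lt_succ_self]
  · ext i j
    rw [restrictSsyt_apply, extendSsyt_apply]
    split_ifs with hν
    exacts [rfl, (S.zeros hν).symm]

theorem ssytCount_succ (μ : YoungDiagram) (k : ℕ) :
    ssytCount μ (k + 1) = ∑ᶠ ν ∈ {ν | ν.rowLen k = 0 ∧ Interlaces ν μ}, ssytCount ν k := by
  set s : Set YoungDiagram := {ν | ν.rowLen k = 0 ∧ Interlaces ν μ} with hs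
  have hunion : boundedSsyt μ (k + 1) =
      ⋃ ν ∈ s, {T ∈ boundedSsyt μ (k + 1) | lowerShape T k = ν} := by
    ext T
    simp only [Set.mem_iUnion, Set.mem_ofPred_eq, exists_prop, exists_eq_right_right', hs]
    exact ⟨fun hT => ⟨⟨rowLen_lowerShape T k, interlaces_lowerShape hT⟩, hT⟩, And.right⟩
  calc ssytCount μ (k + 1)
      = (⋃ ν ∈ s, {T ∈ boundedSsyt μ (k + 1) | lowerShape T k = ν}).ncard := by
        rw [← hunion]; rfl
    _ = ∑ᶠ ν ∈ s, {T ∈ boundedSsyt μ (k + 1) | lowerShape T k = ν}.ncard :=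
        (finite_setOf_interlaces μ k).ncard_biUnion
          (fun _ _ => (finite_boundedSsyt μ (k + 1)).subset fun _ h => h.1)
          fun _ _ _ _ hne => Set.disjoint_left.2 fun _ h h' => hne (h.2.symm.trans h'.2)
    _ = ∑ᶠ ν ∈ s, ssytCount ν k :=
        finsum_mem_congr rfl fun ν hν => (restrictSsyt_bijOn hν.2).ncard_eq

theorem ssytCount_bot (k : ℕ) : ssytCount ⊥ k = 1 := by
  refine Set.ncard_eq_one.2 ⟨default, Set.eq_singleton_iff_unique_mem.2
    ⟨fun i j h => absurd h (notMem_bot _), fun T _ => ?_⟩⟩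
  ext i j
  rw [T.zeros (notMem_bot _), SemistandardYoungTableau.zeros _ (notMem_bot _)]

theorem ssytCount_eq_det_choose {μ : YoungDiagram} {m : ℕ} (hμ : μ.rowLen m = 0) :
    (ssytCount μ m : ℤ) =
      (Matrix.of fun i j : Fin m => ((betaNumber μ m i).choose j : ℤ)).det := by
  induction m generalizing μ with
  | zero => simp [eq_bot_of_rowLen_zero hμ, ssytCount_bot]
  | succ k ih =>
    calc (ssytCount μ (k + 1) : ℤ)
        = ∑ᶠ ν ∈ {ν | ν.rowLen k = 0 ∧ Interlaces ν μ}, (ssytCount ν k : ℤ) := by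
          rw [ssytCount_succ]
          exact (Nat.castAddMonoidHom ℤ).map_finsum_mem _ (finite_setOf_interlaces μ k)
      _ = ∑ᶠ x ∈ (Fintype.piFinset fun i : Fin k =>
            Ico (betaNumber μ (k + 1) i.castSucc) (betaNumber μ (k + 1) i.succ) : Set (Fin k → ℕ)),
            (Matrix.of fun i j : Fin k => ((x i).choose j : ℤ)).det :=
          finsum_mem_eq_of_bijOn _ (betaNumber_bijOn_interlaces hμ) fun ν hν => ih hν.1
      _ = (Matrix.of fun i j : Fin (k + 1) => ((betaNumber μ (k + 1) i).choose j : ℤ)).det := by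
          rw [finsum_mem_coe_finset, ← det_choose_succ (betaNumber_strictMono μ (k + 1)).monotone]

theorem ssytCount_mul_prod_factorial {μ : YoungDiagram} {m : ℕ} (hμ : μ.rowLen m = 0) :
    ssytCount μ m * ∏ j : Fin m, j ! = gapProd (betaSet μ m) (betaSet μ m) := by
  zify
  rw [ssytCount_eq_det_choose hμ, ← det_vandermonde_betaNumber, ← prod_factorial_mul_det_choose,
    mul_comm]

end SemistandardTableaux

section StandardTableaux

open scoped Nat

theorem card_add_one_of_cells_eq_erase {ν μ : YoungDiagram} {c : ℕ × ℕ}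
    (hcells : ν.cells = μ.cells.erase c) (hc : c ∈ μ) : ν.card + 1 = μ.card := by
  rw [YoungDiagram.card, hcells, card_erase_add_one ((mem_cells c).2 hc)]

namespace IsSyt

variable {ν μ : YoungDiagram} {S T : ℕ × ℕ → ℕ} {c : ℕ × ℕ}

theorem lt_card (hT : IsSyt μ T) (hc : c ∈ μ) : T c < μ.card :=
  mem_range.1 (hT.1.mapsTo hc)

theorem finite_setOf (μ : YoungDiagram) : {T | IsSyt μ T}.Finite := by
  refine Set.Finite.of_injOn (f := fun T (c : μ.cells) => T c)
    (t := Set.pi Set.univ fun _ => Set.Iio μ.card)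
    (fun T (hT : IsSyt μ T) c _ => hT.lt_card ((mem_cells _).1 c.2))
    (fun T hT T' hT' h => funext fun c => ?_)
    (Set.Finite.pi fun _ => Set.finite_Iio _)
  by_cases hc : c ∈ μ
  · exact congrFun h ⟨c, (mem_cells _).2 hc⟩
  · rw [hT.2.2.2 c hc, hT'.2.2.2 c hc]

theorem exists_corner (hT : IsSyt μ T) (hμ : 0 < μ.card) :
    ∃ r, μ.rowLen (r + 1) < μ.rowLen r ∧ T (r, μ.rowLen r - 1) = μ.card - 1 := by
  obtain ⟨⟨r, j⟩, hrj, hmax⟩ := hT.1.surjOn (mem_coe.2 (mem_range.2 (Nat.sub_one_lt_of_lt hμ)))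
  have hright : (r, j + 1) ∉ μ := fun h => by
    have := hT.2.1 r j h
    have := lt_card hT h
    omega
  have hbelow : (r + 1, j) ∉ μ := fun h => by
    have := hT.2.2.1 r j h
    have := lt_card hT h
    omega
  rw [mem_coe, mem_cells] at hrj
  rw [mem_iff_lt_rowLen] at hrj hright hbelow
  have hj : μ.rowLen r - 1 = j := by omega
  exact ⟨r, by omega, hj ▸ hmax⟩

theorem update_zero (hcells : ν.cells = μ.cells.erase c) (hc : c ∈ μ) (hT : IsSyt μ T)
    (hTc : T c = ν.card) : IsSyt ν (Function.update T c 0) := by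
  have hmem (d : ℕ × ℕ) : d ∈ ν ↔ d ≠ c ∧ d ∈ μ := by
    rw [← mem_cells, hcells, mem_erase, mem_cells]
  have hcard : ν.card + 1 = μ.card := card_add_one_of_cells_eq_erase hcells hc
  have heq {d : ℕ × ℕ} (hd : d ∈ ν) : Function.update T c 0 d = T d :=
    Function.update_of_ne ((hmem d).1 hd).1 _ _
  refine ⟨?_, fun i j h => ?_, fun i j h => ?_, fun d hd => ?_⟩
  · refine Set.BijOn.congr ?_ fun d hd => (heq ((mem_cells d).1 hd)).symm
    convert hT.1.sdiff_singleton ((mem_cells c).2 hc) using 1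
    · rw [hcells, coe_erase]
    · rw [hTc, ← hcard, range_add_one, coe_insert, Set.insert_sdiff_self_of_notMem (by simp)]
  · rw [heq h, heq (ν.up_left_mem le_rfl j.le_succ h)]
    exact hT.2.1 i j ((hmem _).1 h).2
  · rw [heq h, heq (ν.up_left_mem i.le_succ le_rfl h)]
    exact hT.2.2.1 i j ((hmem _).1 h).2
  · obtain rfl | hdc := eq_or_ne d c
    · exact Function.update_self _ _ _
    · rw [Function.update_of_ne hdc]
      exact hT.2.2.2 d fun h => hd ((hmem d).2 ⟨hdc, h⟩)

theorem update_card (hcells : ν.cells = μ.cells.erase c) (hc : c ∈ μ) (hS : IsSyt ν S) :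
    IsSyt μ (Function.update S c ν.card) := by
  have hmem {d : ℕ × ℕ} (hdc : d ≠ c) : d ∈ μ ↔ d ∈ ν := by
    rw [← mem_cells, ← mem_cells, hcells, mem_erase, and_iff_right hdc]
  have hcν : c ∉ ν := by rw [← mem_cells, hcells]; exact notMem_erase c _
  have hcard : ν.card + 1 = μ.card := card_add_one_of_cells_eq_erase hcells hc
  have hlt {d e : ℕ × ℕ} (hde : d ≤ e) (hne : d ≠ e) (he : e ∈ μ) (hSde : e ∈ ν → S d < S e) :
      Function.update S c ν.card d < Function.update S c ν.card e := by
    obtain rfl | hec := eq_or_ne e c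
    · rw [Function.update_self, Function.update_of_ne hne]
      exact lt_card hS ((hmem hne).1 (μ.up_left_mem hde.1 hde.2 he))
    · have heν := (hmem hec).1 he
      have hdc : d ≠ c := fun h => hcν (h ▸ ν.up_left_mem hde.1 hde.2 heν)
      rw [Function.update_of_ne hec, Function.update_of_ne hdc]
      exact hSde heν
  refine ⟨?_, fun i j h => ?_, fun i j h => ?_, fun d hd => ?_⟩
  · have hbij : Set.BijOn (Function.update S c ν.card) ν.cells (range ν.card) :=
      hS.1.congr fun d hd => (Function.update_of_ne (fun h : d = c => hcν (h ▸ hd)) _ _).symm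
    convert hbij.insert (a := c) (by simp) using 1
    · rw [hcells, ← coe_insert, insert_erase ((mem_cells c).2 hc)]
    · rw [Function.update_self, ← coe_insert, ← range_add_one, hcard]
  · exact hlt ⟨le_rfl, j.le_succ⟩ (by simp) h (hS.2.1 i j)
  · exact hlt ⟨i.le_succ, le_rfl⟩ (by simp) h (hS.2.2.1 i j)
  · have hdc : d ≠ c := fun h => hd (h ▸ hc)
    rw [Function.update_of_ne hdc]
    exact hS.2.2.2 d ((hmem hdc).not.1 hd)

theorem update_zero_bijOn (hcells : ν.cells = μ.cells.erase c) (hc : c ∈ μ) :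
    Set.BijOn (fun T => Function.update T c 0) {T | IsSyt μ T ∧ T c = ν.card} {S | IsSyt ν S} := by
  refine ⟨fun T hT => update_zero hcells hc hT.1 hT.2, fun T hT T' hT' h => funext fun d => ?_,
    fun S hS => ⟨Function.update S c ν.card,
      ⟨update_card hcells hc hS, Function.update_self _ _ _⟩, ?_⟩⟩
  · obtain rfl | hdc := eq_or_ne d c
    · rw [hT.2, hT'.2]
    · simpa [hdc] using congrFun h d
  · have hcν : c ∉ ν := by rw [← mem_cells, hcells]; exact notMem_erase c _
    have hSc : S c = 0 := hS.2.2.2 c hcν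
    simp [← hSc]

end IsSyt

/-- The diagram obtained from `μ` by removing the last box of row `r` if this box is a corner;
otherwise it is `μ` itself. -/
def removeCorner (μ : YoungDiagram) (r : ℕ) : YoungDiagram where
  cells := μ.cells.filter fun c => c.1 = r → c.2 < μ.rowLen (r + 1) ∨ c.2 + 1 < μ.rowLen r
  isLowerSet := by
    rintro ⟨i, j⟩ ⟨i', j'⟩ ⟨hi, hj⟩ h
    simp only [coe_filter, mem_cells, Set.mem_ofPred_eq] at h ⊢ hi hj
    refine ⟨μ.up_left_mem hi hj h.1, ?_⟩
    rintro rfl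
    obtain rfl | hi := hi.eq_or_lt
    · exact (h.2 rfl).imp hj.trans_lt (Nat.succ_le_succ hj).trans_lt
    · exact Or.inl ((hj.trans_lt (mem_iff_lt_rowLen.1 h.1)).trans_le (μ.rowLen_anti _ _ hi))

theorem cells_removeCorner {μ : YoungDiagram} {r : ℕ} (hr : μ.rowLen (r + 1) < μ.rowLen r) :
    (removeCorner μ r).cells = μ.cells.erase (r, μ.rowLen r - 1) := by
  ext ⟨i, j⟩
  rw [removeCorner, mem_filter, mem_erase, mem_cells, mem_iff_lt_rowLen, Ne, Prod.mk.injEq]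
  obtain rfl | hi := eq_or_ne i r
  · simp only [true_and, forall_const]
    omega
  · simp [hi]

theorem card_removeCorner_add_one {μ : YoungDiagram} {r : ℕ}
    (hr : μ.rowLen (r + 1) < μ.rowLen r) : (removeCorner μ r).card + 1 = μ.card :=
  card_add_one_of_cells_eq_erase (cells_removeCorner hr)
    (mem_iff_lt_rowLen.2 (Nat.sub_one_lt_of_lt hr))

theorem rowLen_removeCorner {μ : YoungDiagram} {r : ℕ} (hr : μ.rowLen (r + 1) < μ.rowLen r) :
    (removeCorner μ r).rowLen = Function.update μ.rowLen r (μ.rowLen r - 1) := by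
  refine funext fun i => eq_of_forall_lt_iff fun j => ?_
  rw [← mem_iff_lt_rowLen, ← mem_cells, cells_removeCorner hr, mem_erase, mem_cells,
    mem_iff_lt_rowLen, Ne, Prod.mk.injEq]
  obtain rfl | hi := eq_or_ne i r
  · simp only [true_and, Function.update_self]
    omega
  · simp [hi]

theorem sytCount_eq_sum_removeCorner {μ : YoungDiagram} {m : ℕ} (hμ : μ.rowLen m = 0)
    (hcard : 0 < μ.card) :
    sytCount μ = ∑ r ∈ range m with μ.rowLen (r + 1) < μ.rowLen r, sytCount (removeCorner μ r) := by
  set t : Finset ℕ := {r ∈ range m | μ.rowLen (r + 1) < μ.rowLen r}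
  let fiber (r : ℕ) : Set (ℕ × ℕ → ℕ) := {T | IsSyt μ T ∧ T (r, μ.rowLen r - 1) = μ.card - 1}
  have hcorner {r : ℕ} (hr : r ∈ (t : Set ℕ)) : (r, μ.rowLen r - 1) ∈ μ :=
    mem_iff_lt_rowLen.2 (Nat.sub_one_lt_of_lt (mem_filter.1 hr).2)
  have hunion : {T | IsSyt μ T} = ⋃ r ∈ (t : Set ℕ), fiber r := by
    ext T
    simp only [Set.mem_iUnion, fiber, Set.mem_ofPred_eq, exists_prop]
    refine ⟨fun hT => ?_, fun ⟨_, _, hT, _⟩ => hT⟩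
    obtain ⟨r, hr, hmax⟩ := hT.exists_corner hcard
    refine ⟨r, mem_coe.2 (mem_filter.2 ⟨mem_range.2 ?_, hr⟩), hT, hmax⟩
    by_contra! hmr
    simp [rowLen_eq_zero_of_le hμ hmr] at hr
  have hdisjoint : (t : Set ℕ).PairwiseDisjoint fiber := fun r hr r' hr' hne =>
    Set.disjoint_left.2 fun T hT hT' => hne <| congrArg Prod.fst <|
      hT.1.1.injOn ((mem_cells _).2 (hcorner hr)) ((mem_cells _).2 (hcorner hr'))
        (hT.2.trans hT'.2.symm)
  rw [sytCount, hunion, t.finite_toSet.ncard_biUnion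
    (fun r _ => (IsSyt.finite_setOf μ).subset fun T hT => hT.1) hdisjoint, finsum_mem_coe_finset]
  refine sum_congr rfl fun r hr => ?_
  have hr' := (mem_filter.1 hr).2
  simp_rw [fiber, ← card_removeCorner_add_one hr', Nat.add_sub_cancel]
  exact (IsSyt.update_zero_bijOn (cells_removeCorner hr') (hcorner hr)).ncard_eq

theorem sytCount_bot : sytCount ⊥ = 1 := by
  refine Set.ncard_eq_one.2 ⟨0, Set.eq_singleton_iff_unique_mem.2
    ⟨⟨?_, ?_, ?_, fun _ _ => rfl⟩, fun T hT => funext fun c => hT.2.2.2 c (notMem_bot c)⟩⟩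
  · simp
  · exact fun _ _ h => absurd h (notMem_bot _)
  · exact fun _ _ h => absurd h (notMem_bot _)

theorem mul_prod_factorial_update_sub_one {ι : Type*} [Fintype ι] [DecidableEq ι] (f : ι → ℕ)
    {i : ι} (hi : f i ≠ 0) : f i * ∏ j, (Function.update f i (f i - 1) j)! = ∏ j, (f j)! := by
  rw [← mul_prod_erase univ _ (mem_univ i), ← mul_prod_erase univ (fun j => (f j)!) (mem_univ i),
    Function.update_self, ← mul_assoc, Nat.mul_factorial_pred hi]
  congr 1
  exact prod_congr rfl fun j hj => by rw [Function.update_of_ne (ne_of_mem_erase hj)]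

theorem betaNumber_removeCorner {μ : YoungDiagram} {m : ℕ} {i : Fin m}
    (hi : μ.rowLen (i.rev + 1) < μ.rowLen i.rev) :
    betaNumber (removeCorner μ i.rev) m =
      Function.update (betaNumber μ m) i (betaNumber μ m i - 1) := by
  ext j
  obtain rfl | hj := eq_or_ne j i
  · simp only [betaNumber, rowLen_removeCorner hi, Function.update_self]
    omega
  · have hrev : (j.rev : ℕ) ≠ i.rev := fun h => hj (Fin.rev_injective (Fin.ext h))
    simp only [betaNumber, rowLen_removeCorner hi, Function.update_of_ne hj,
      Function.update_of_ne hrev]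

theorem betaNumber_ne_zero {μ : YoungDiagram} {m : ℕ} {i : Fin m}
    (hi : μ.rowLen (i.rev + 1) < μ.rowLen i.rev) : betaNumber μ m i ≠ 0 := by
  rw [betaNumber]
  omega

theorem cast_betaNumber_removeCorner {μ : YoungDiagram} {m : ℕ} {i : Fin m}
    (hi : μ.rowLen (i.rev + 1) < μ.rowLen i.rev) :
    (fun j => (betaNumber (removeCorner μ i.rev) m j : ℤ)) =
      Function.update (fun j => (betaNumber μ m j : ℤ)) i (betaNumber μ m i - 1) := by
  rw [betaNumber_removeCorner hi, ← Nat.cast_pred (Nat.pos_of_ne_zero (betaNumber_ne_zero hi))]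
  exact Function.comp_update _ _ _ _

theorem betaNumber_mul_prod_factorial_removeCorner {μ : YoungDiagram} {m : ℕ} {i : Fin m}
    (hi : μ.rowLen (i.rev + 1) < μ.rowLen i.rev) :
    betaNumber μ m i * ∏ j, (betaNumber (removeCorner μ i.rev) m j)! =
      ∏ j, (betaNumber μ m j)! := by
  rw [betaNumber_removeCorner hi, mul_prod_factorial_update_sub_one _ (betaNumber_ne_zero hi)]

theorem mul_det_vandermonde_update_eq_zero {μ : YoungDiagram} {m : ℕ} (hμ : μ.rowLen m = 0)
    {i : Fin m} (hi : ¬ μ.rowLen (i.rev + 1) < μ.rowLen i.rev) :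
    (betaNumber μ m i : ℤ) * (Matrix.vandermonde (Function.update (fun j => (betaNumber μ m j : ℤ))
      i (betaNumber μ m i - 1))).det = 0 := by
  -- Lowering a beta-number that is not a corner makes it collide with its predecessor, except in
  -- the last row of the frame, where it is already `0`.
  have hrow : μ.rowLen (i.rev + 1) = μ.rowLen i.rev :=
    (μ.rowLen_anti _ _ (Nat.le_succ _)).antisymm (not_lt.1 hi)
  obtain ⟨i, him⟩ := i
  cases i with
  | zero =>
    rw [Fin.val_rev, Nat.zero_add, Nat.sub_add_cancel him, hμ] at hrow
    simp [betaNumber, ← hrow]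
  | succ i =>
    refine mul_eq_zero_of_right _ (Matrix.det_vandermonde_eq_zero_iff.2
      ⟨⟨i, i.lt_succ_self.trans him⟩, ⟨i + 1, him⟩, ?_, by simp⟩)
    rw [Function.update_self, Function.update_of_ne (by simp)]
    simp only [betaNumber, Fin.val_rev] at hrow ⊢
    rw [← hrow, show m - (i + 1 + 1) + 1 = m - (i + 1) by omega]
    push_cast
    ring

theorem sytCount_mul_prod_factorial_eq_det {μ : YoungDiagram} {m : ℕ} (hμ : μ.rowLen m = 0) :
    (sytCount μ : ℤ) * ∏ i, ((betaNumber μ m i)! : ℤ) =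
      μ.card ! * (Matrix.vandermonde fun i => (betaNumber μ m i : ℤ)).det := by
  induction hp : μ.card generalizing μ with
  | zero =>
    obtain rfl : μ = ⊥ := YoungDiagram.ext (card_eq_zero.1 hp)
    rw [det_vandermonde_betaNumber, ← prod_betaSet (f := fun a => (a ! : ℤ)), betaSet_bot,
      gapProd_range_left Subset.rfl, sytCount_bot]
    simp
  | succ p ih =>
    have hterm (i : Fin m) :
        (if μ.rowLen (i.rev + 1) < μ.rowLen i.rev then (sytCount (removeCorner μ i.rev) : ℤ) else 0)
          * ∏ j, ((betaNumber μ m j)! : ℤ) =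
        p ! * (betaNumber μ m i * (Matrix.vandermonde
          (Function.update (fun j => (betaNumber μ m j : ℤ)) i (betaNumber μ m i - 1))).det) := by
      split_ifs with hi
      · have hν : (removeCorner μ i.rev).rowLen m = 0 := by
          rw [rowLen_removeCorner hi, Function.update_of_ne i.rev.is_lt.ne', hμ]
        have hνp : (removeCorner μ i.rev).card = p :=
          Nat.succ_injective ((card_removeCorner_add_one hi).trans hp)
        rw [← cast_betaNumber_removeCorner hi, mul_left_comm, ← ih hν hνp, mul_left_comm]
        exact_mod_cast congrArg (sytCount (removeCorner μ i.rev) * ·)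
          (betaNumber_mul_prod_factorial_removeCorner hi).symm
      · rw [mul_det_vandermonde_update_eq_zero hμ hi, zero_mul, mul_zero]
    calc (sytCount μ : ℤ) * ∏ j, ((betaNumber μ m j)! : ℤ)
        = ∑ i : Fin m, (if μ.rowLen (i.rev + 1) < μ.rowLen i.rev then
            (sytCount (removeCorner μ i.rev) : ℤ) else 0) * ∏ j, ((betaNumber μ m j)! : ℤ) := by
          rw [sytCount_eq_sum_removeCorner hμ (hp ▸ p.succ_pos), sum_filter, sum_range,
            ← Equiv.sum_comp Fin.revPerm, ← sum_mul]
          push_cast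
          rfl
      _ = p ! * (μ.card * (Matrix.vandermonde fun i => (betaNumber μ m i : ℤ)).det) := by
          simp_rw [hterm, ← mul_sum]
          rw [sum_mul_det_vandermonde_update_sub_one, sum_betaNumber_sub hμ]
      _ = (p + 1)! * (Matrix.vandermonde fun i => (betaNumber μ m i : ℤ)).det := by
          rw [hp, Nat.factorial_succ]
          push_cast
          ring

theorem sytCount_mul_prod_factorial {μ : YoungDiagram} {m : ℕ} (hμ : μ.rowLen m = 0) :
    sytCount μ * ∏ a ∈ betaSet μ m, a ! = μ.card ! * gapProd (betaSet μ m) (betaSet μ m) := by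
  rw [prod_betaSet]
  zify
  rw [sytCount_mul_prod_factorial_eq_det hμ, det_vandermonde_betaNumber]

end StandardTableaux

section Rectangle

open scoped Nat

variable {m n : ℕ} {μ : YoungDiagram}

theorem rowLen_rect (m n i : ℕ) : (rect m n).rowLen i = if i < m then n else 0 := by
  refine eq_of_forall_lt_iff fun j => ?_
  rw [← mem_iff_lt_rowLen, ← mem_cells, rect, mem_product, mem_range, mem_range]
  split_ifs with hi <;> simp [hi]

theorem rowLen_complement (m n : ℕ) (μ : YoungDiagram) (i : ℕ) :
    (complement m n μ).rowLen i = if i < m then n - μ.rowLen (m - 1 - i) else 0 := by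
  refine eq_of_forall_lt_iff fun j => ?_
  rw [← mem_iff_lt_rowLen, ← mem_cells, complement, mem_filter, mem_product, mem_range, mem_range]
  split_ifs with hi
  · simp only [hi, true_and]
    omega
  · simp [hi]

theorem rowLen_le_of_le_rect (hμ : μ ≤ rect m n) (i : ℕ) : μ.rowLen i ≤ n := by
  have := le_iff_rowLen_le.1 hμ i
  rw [rowLen_rect] at this
  split_ifs at this <;> omega

theorem rowLen_eq_zero_of_le_rect (hμ : μ ≤ rect m n) : μ.rowLen m = 0 := by
  simpa [rowLen_rect] using le_iff_rowLen_le.1 hμ m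

theorem transpose_rect (m n : ℕ) : (rect m n).transpose = rect n m := by
  refine SetLike.ext fun ⟨i, j⟩ => ?_
  rw [mem_transpose, ← mem_cells, ← mem_cells, rect, rect, mem_product, mem_product]
  exact and_comm

theorem transpose_le_rect (hμ : μ ≤ rect m n) : μ.transpose ≤ rect n m :=
  transpose_rect m n ▸ YoungDiagram.transpose_mono hμ

theorem card_complement (hμ : μ ≤ rect m n) : (complement m n μ).card = m * n - μ.card := by
  refine Nat.eq_sub_of_add_eq ?_
  rw [card_eq_sum_rowLen (m := m) (by simp [rowLen_complement]),
    card_eq_sum_rowLen (rowLen_eq_zero_of_le_rect hμ), ← sum_range_reflect, ← sum_add_distrib]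
  calc ∑ i ∈ range m, ((complement m n μ).rowLen (m - 1 - i) + μ.rowLen i)
      = ∑ _i ∈ range m, n := by
        refine sum_congr rfl fun i hi => ?_
        have hi := mem_range.1 hi
        rw [rowLen_complement, if_pos (by omega), show m - 1 - (m - 1 - i) = i by omega,
          Nat.sub_add_cancel (rowLen_le_of_le_rect hμ i)]
    _ = m * n := by simp

theorem betaSet_subset_range (hμ : μ ≤ rect m n) : betaSet μ m ⊆ range (m + n) := by
  refine image_subset_iff.2 fun i _ => mem_range.2 ?_
  have := rowLen_le_of_le_rect hμ i.rev
  rw [betaNumber]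
  omega

theorem betaSet_complement (hμ : μ ≤ rect m n) :
    betaSet (complement m n μ) m = (betaSet μ m).image (m + n - 1 - ·) := by
  have hbeta (i : Fin m) :
      betaNumber (complement m n μ) m i = m + n - 1 - betaNumber μ m i.rev := by
    have := rowLen_le_of_le_rect hμ i
    simp only [betaNumber, rowLen_complement, if_pos i.rev.is_lt, Fin.rev_rev]
    rw [Fin.val_rev, show m - 1 - (m - (i + 1)) = (i : ℕ) by omega]
    omega
  ext a
  simp only [betaSet, mem_image, mem_univ, true_and, hbeta, exists_exists_eq_and]
  exact (Fin.rev_surjective.exists (p := fun i => m + n - 1 - betaNumber μ m i = a)).symm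

theorem betaSet_transpose (hμ : μ ≤ rect m n) :
    betaSet μ.transpose n = (range (m + n) \ betaSet μ m).image (m + n - 1 - ·) := by
  refine eq_of_subset_of_card_le (image_subset_iff.2 fun j _ => mem_image.2 ?_) ?_
  · have hcol : μ.colLen j.rev ≤ m := by
      simpa using rowLen_le_of_le_rect (transpose_le_rect hμ) j.rev
    simp only [betaNumber, rowLen_transpose]
    refine ⟨m + n - 1 - (μ.colLen j.rev + j), mem_sdiff.2 ⟨mem_range.2 (by omega), ?_⟩, by omega⟩
    rw [betaSet, mem_image]
    rintro ⟨i, -, hi⟩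
    have hrow := mem_iff_lt_rowLen (μ := μ) (i := i.rev) (j := j.rev)
    rw [mem_iff_lt_colLen] at hrow
    simp only [betaNumber, Fin.val_rev] at hi hrow hcol
    omega
  · rw [card_image_of_injOn (injOn_reflect sdiff_subset),
      card_sdiff_of_subset (betaSet_subset_range hμ), card_range, card_betaSet, card_betaSet,
      Nat.add_sub_cancel_left]

theorem sytCount_mul_sytCount_complement (hμ : μ ≤ rect m n) :
    sytCount μ * sytCount (complement m n μ) * gapProd (range (m + n)) (range (m + n)) =
      μ.card ! * (m * n - μ.card)! * ((∏ i : Fin m, i !) * ∏ j : Fin n, j !) *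
        (ssytCount μ m * ssytCount μ.transpose n) := by
  have hA := betaSet_subset_range hμ
  have hssyt := ssytCount_mul_prod_factorial (rowLen_eq_zero_of_le_rect hμ)
  have hssyt' := ssytCount_mul_prod_factorial (rowLen_eq_zero_of_le_rect (transpose_le_rect hμ))
  have hsyt := sytCount_mul_prod_factorial (rowLen_eq_zero_of_le_rect hμ)
  have hsyt' := sytCount_mul_prod_factorial (μ := complement m n μ) (m := m)
    (by simp [rowLen_complement])
  rw [betaSet_transpose hμ, gapProd_image_reflect sdiff_subset sdiff_subset] at hssyt'
  rw [card_complement hμ, betaSet_complement hμ, prod_image (injOn_reflect hA),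
    gapProd_image_reflect hA hA] at hsyt'
  have hgap := gapProd_sdiff_mul_factorials hA
  set A := betaSet μ m
  set B := range (m + n) \ A
  refine Nat.eq_of_mul_eq_mul_right (gapProd_pos A A) ?_
  calc sytCount μ * sytCount (complement m n μ) * gapProd (range (m + n)) (range (m + n)) *
        gapProd A A
      = (sytCount μ * ∏ a ∈ A, a !) *
          (sytCount (complement m n μ) * ∏ a ∈ A, (m + n - 1 - a)!) * gapProd B B := by
        rw [mul_assoc, mul_comm (gapProd _ _), ← hgap]; ring
    _ = μ.card ! * (m * n - μ.card)! * (gapProd A A * gapProd B B) * gapProd A A := by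
        rw [hsyt, hsyt']; ring
    _ = μ.card ! * (m * n - μ.card)! * ((∏ i : Fin m, i !) * ∏ j : Fin n, j !) *
          (ssytCount μ m * ssytCount μ.transpose n) * gapProd A A := by
        rw [← hssyt, ← hssyt']; ring

end Rectangle

/-- the cross identity
`dim S^λ(ℂ^m)·dim S^{λ'}(ℂ^n)·f^μ·f^{n^m/μ} = dim S^μ(ℂ^m)·dim S^{μ'}(ℂ^n)·f^λ·f^{n^m/λ}`. -/
theorem cross_identity (m n p : ℕ) (μ ν : YoungDiagram)
    (hμ : μ ≤ rect m n) (hν : ν ≤ rect m n) (hμp : μ.card = p) (hνp : ν.card = p) :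
    ssytCount μ m * ssytCount μ.transpose n * (sytCount ν * sytCount (complement m n ν))
      = ssytCount ν m * ssytCount ν.transpose n * (sytCount μ * sytCount (complement m n μ)) := by
  have hfμ := sytCount_mul_sytCount_complement hμ
  have hfν := sytCount_mul_sytCount_complement hν
  rw [hμp] at hfμ
  rw [hνp] at hfν
  refine Nat.eq_of_mul_eq_mul_right (gapProd_pos (range (m + n)) (range (m + n))) ?_
  rw [mul_assoc, mul_assoc _ (_ * _), hfμ, hfν]
  ring
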